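/- Let F = ⋃_{j=1}^J φ_j(F) ⊂ ℝ^d be the self-similar attractor of an IFS Φ = {φ_j}_{j=1}^J (J ≥ 2) of similitudes with scaling ratios 0 < r_j < 1, and let D be the unique real root of ∑_{j=1}^J r_j^D = 1. Assume dim[F] = d (where [F] = C denotes the convex hull of F), that Φ satisfies the Tileset Condition (the open set condition with int C as feasible open set), the Nontriviality Condition (int C ⊄ ⋃_j φ_j(C)), and the Pearse–Winter Condition (∂C ⊂ F). Assume D > d−1, assume T_0 = C ∖ ⋃_j φ_j(C) has a single connected component G which is diphase Steiner-like with inradius g and coefficients κ_0(G),…,κ_d(G). If Φ is of non-lattice type (i.e. the additive subgroup ∑_{j=1}^J (log r_j)ℤ of ℝ is dense), then F is Minkowski measurable with Minkowski content M(F) = (∑_{m=0}^d (g^{D−m}/(D−m)) κ_m(G)) / (∑_{j=1}^J r_j^D log r_j^{−1}). -/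

import Mathlib

open MeasureTheory Filter

/-- The inner `ε`-neighborhood of a set `G`:
`{x ∈ closure G | dist(x, Gᶜ) ≤ ε}`. -/
def innerNbhd {d : ℕ} (G : Set (EuclideanSpace ℝ (Fin d))) (ε : ℝ) :
    Set (EuclideanSpace ℝ (Fin d)) :=
  {x ∈ closure G | Metric.infDist x Gᶜ ≤ ε}

/-!
Let `W ε` be the volume of `C ∩ F_ε`. Because `∂C ⊆ F`, the boundary of each `φ j '' C` lies in
`φ j '' F` and that of the generating tile `T₀` lies in `F`, so the distance to `F` is determined
inside each piece. Hence `W ε = h ε + ∑ j, r j ^ d * W (ε / r j)`, where `h ε` is the volume of the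
inner `ε`-neighborhood of `T₀`. After the substitution `ε = exp (-t)`,
`w t = exp ((d - D) * t) * W (exp (-t))` solves a renewal equation with probability weights
`r j ^ D` and shifts `-log (r j)`.

For the limit of `w`, choose an ultrafilter along which `w` tends to its limsup (or liminf). A
weighted average reaches an extremal value only if all its terms do, so the same limit is reached
along all translates by the additive semigroup generated by the shifts. In the non-lattice case the
differences of this semigroup are dense, so, as `w` cannot increase quickly, it is nearly constant
on arbitrarily long windows. The sum `∑ j, r j ^ D * ∫ w` over the windows `[t + log (r j), t]`
tends to the integral of the inhomogeneity, and this determines both extremal limits. Finally, the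
part of `F_ε` outside the convex set `C` has volume `O(ε)`, which is negligible since `D > d - 1`.
-/

section

open Set Topology

section SemigroupNet

variable {A : Type*} [AddCommGroup A] {S : Set A}

lemma exists_add_mem_addSubmonoid_closure {x : A} (hx : x ∈ AddSubgroup.closure S) :
    ∃ t ∈ AddSubmonoid.closure S, t + x ∈ AddSubmonoid.closure S := by
  induction hx using AddSubgroup.closure_induction with
  | mem x hx => exact ⟨0, zero_mem _, by simpa using AddSubmonoid.subset_closure hx⟩
  | zero => exact ⟨0, zero_mem _, by simp⟩
  | add x y _ _ hx hy =>
    obtain ⟨s, hs, hsx⟩ := hx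
    obtain ⟨t, ht, hty⟩ := hy
    exact ⟨s + t, add_mem hs ht, by simpa only [add_add_add_comm] using add_mem hsx hty⟩
  | neg x _ hx =>
    obtain ⟨t, ht, htx⟩ := hx
    exact ⟨t + x, htx, by simpa using ht⟩

lemma exists_forall_add_mem_addSubmonoid_closure (T : Finset A)
    (hT : ∀ x ∈ T, x ∈ AddSubgroup.closure S) :
    ∃ t ∈ AddSubmonoid.closure S, ∀ x ∈ T, t + x ∈ AddSubmonoid.closure S := by
  classical
  induction T using Finset.induction_on with
  | empty => exact ⟨0, zero_mem _, by simp⟩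
  | insert x T _ ih =>
    obtain ⟨t, ht, htT⟩ := ih fun y hy => hT y (Finset.mem_insert_of_mem hy)
    obtain ⟨s, hs, hsx⟩ := exists_add_mem_addSubmonoid_closure (hT x (Finset.mem_insert_self x T))
    refine ⟨s + t, add_mem hs ht, fun y hy => ?_⟩
    rcases Finset.mem_insert.1 hy with rfl | hy
    · simpa only [add_right_comm] using add_mem hsx ht
    · simpa only [add_assoc] using add_mem hs (htT y hy)

lemma exists_finset_addSubmonoid_closure_net [TopologicalSpace A] [IsTopologicalAddGroup A]
    (hS : Dense (AddSubgroup.closure S : Set A)) {K U : Set A} (hK : IsCompact K)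
    (hU : IsOpen U) (hUne : U.Nonempty) :
    ∃ t : A, ∃ T : Finset A, (∀ s ∈ T, s ∈ AddSubmonoid.closure S) ∧
      ∀ y ∈ K, ∃ s ∈ T, t + y - s ∈ U := by
  classical
  have hcover : K ⊆ ⋃ x : AddSubgroup.closure S, (fun y => y - (x : A)) ⁻¹' U := by
    intro y _
    obtain ⟨u, hu⟩ := hUne
    obtain ⟨x, hxU, hx⟩ := hS.inter_open_nonempty ((fun x => y - x) ⁻¹' U)
      (hU.preimage (continuous_const.sub continuous_id)) ⟨y - u, by simpa using hu⟩
    exact mem_iUnion.2 ⟨⟨x, hx⟩, hxU⟩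
  obtain ⟨T, hT⟩ := hK.elim_finite_subcover _
    (fun x : AddSubgroup.closure S => hU.preimage (continuous_sub_right (x : A))) hcover
  obtain ⟨t, -, ht⟩ := exists_forall_add_mem_addSubmonoid_closure (S := S) (T.image (↑))
    (by simp +contextual)
  refine ⟨t, (T.image (↑)).image (t + ·), ?_, fun y hy => ?_⟩
  · simpa only [Finset.forall_mem_image] using ht
  · obtain ⟨x, hx, hyx⟩ := mem_iUnion₂.1 (hT hy)
    exact ⟨t + x, Finset.mem_image_of_mem _ (Finset.mem_image_of_mem _ hx),
      by simpa using hyx⟩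

end SemigroupNet

section Propagation

variable {ι α : Type*} [Fintype ι] {p : ι → ℝ} {l : Filter α} {L : ℝ}

lemma tendsto_of_tendsto_convexCombination {f : ι → α → ℝ} (hp : ∀ i, 0 < p i)
    (hp1 : ∑ i, p i = 1) (hf : ∀ i, ∀ δ > 0, ∀ᶠ t in l, f i t < L + δ)
    (hsum : Tendsto (fun t => ∑ i, p i * f i t) l (𝓝 L)) (j : ι) : Tendsto (f j) l (𝓝 L) := by
  classical
  have hmax : ∀ i, Tendsto (fun t => max (f i t) L) l (𝓝 L) := fun i => by
    refine tendsto_order.2 ⟨fun b hb => .of_forall fun t => lt_max_of_lt_right hb, fun b hb => ?_⟩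
    filter_upwards [hf i (b - L) (sub_pos.2 hb)] with t ht
    exact max_lt (by linarith) hb
  have hrest : Tendsto (fun t => ((∑ i, p i * f i t) -
      ∑ i ∈ Finset.univ.erase j, p i * max (f i t) L) / p j) l (𝓝 L) := by
    have hlim := (hsum.sub (tendsto_finsetSum (Finset.univ.erase j) fun i _ =>
      (hmax i).const_mul (p i))).div_const (p j)
    have hpj : ∑ i ∈ Finset.univ.erase j, p i = 1 - p j := by
      rw [← hp1, ← Finset.add_sum_erase _ _ (Finset.mem_univ j), add_sub_cancel_left]
    convert hlim using 2
    rw [← Finset.sum_mul, hpj]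
    field_simp [(hp j).ne']
    ring
  refine tendsto_of_tendsto_of_tendsto_of_le_of_le hrest (hmax j) (fun t => ?_)
    fun t => le_max_left _ _
  rw [div_le_iff₀' (hp j), ← Finset.add_sum_erase _ _ (Finset.mem_univ j)]
  have := Finset.sum_le_sum fun i (_ : i ∈ Finset.univ.erase j) =>
    mul_le_mul_of_nonneg_left (le_max_left (f i t) L) (hp i).le
  linarith

-- A weighted average can only reach the extremal value `L` if all averaged terms do.
lemma tendsto_comp_sub_of_mem_addSubmonoid_closure {a : ι → ℝ} {f : ℝ → ℝ} {l : Filter ℝ}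
    (hl : l ≤ atTop) (hp : ∀ i, 0 < p i) (hp1 : ∑ i, p i = 1)
    (hf : Tendsto (fun t => f t - ∑ i, p i * f (t - a i)) atTop (𝓝 0))
    (hfL : ∀ δ > 0, ∀ᶠ t in atTop, f t < L + δ) (hfl : Tendsto f l (𝓝 L)) {s : ℝ}
    (hs : s ∈ AddSubmonoid.closure (range a)) : Tendsto (fun t => f (t - s)) l (𝓝 L) := by
  have hshift : ∀ s : ℝ, Tendsto (fun t => t - s) l atTop := fun s =>
    (tendsto_atTop_add_const_right _ (-s) tendsto_id).mono_left hl
  induction hs using AddSubmonoid.closure_induction_right with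
  | zero => simpa using hfl
  | add_right s _ y hy ih =>
    obtain ⟨j, rfl⟩ := hy
    refine tendsto_of_tendsto_convexCombination (f := fun i t => f (t - (s + a i))) hp hp1
      (fun i δ hδ => (hshift _).eventually (hfL δ hδ)) ?_ j
    simpa [Function.comp_def, sub_sub] using ih.sub (hf.comp (hshift s))

end Propagation

section Renewal

variable {ι : Type*} {p a : ι → ℝ} {w z : ℝ → ℝ} {c L Z : ℝ}

/-- The nonnegative function `w` grows at most at exponential rate `c`, at every time scale. This
one-sided regularity replaces direct Riemann integrability in the renewal theorem below. -/
structure HasExpGrowth (c : ℝ) (w : ℝ → ℝ) : Prop where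
  rate_nonneg : 0 ≤ c
  nonneg (t : ℝ) : 0 ≤ w t
  add_le (t : ℝ) {s : ℝ} (hs : 0 ≤ s) : w (t + s) ≤ Real.exp (c * s) * w t

lemma HasExpGrowth.le_exp_mul (hw : HasExpGrowth c w) {x t η : ℝ} (hxt : x ≤ t)
    (htx : t ≤ x + η) : w t ≤ Real.exp (c * η) * w x := by
  calc w t = w (x + (t - x)) := by rw [add_sub_cancel]
    _ ≤ Real.exp (c * (t - x)) * w x := hw.add_le x (sub_nonneg.2 hxt)
    _ ≤ Real.exp (c * η) * w x := by
      gcongr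
      · exact hw.nonneg x
      · exact hw.rate_nonneg
      · linarith

lemma exists_eventually_forall_window_abs_sub_le {l : Filter ℝ} (hw : HasExpGrowth c w)
    (hd : Dense (AddSubgroup.closure (range a) : Set ℝ))
    (hlim : ∀ s ∈ AddSubmonoid.closure (range a), Tendsto (fun t => w (t - s)) l (𝓝 L))
    (A : ℝ) {δ : ℝ} (hδ : 0 < δ) :
    ∃ M, ∀ᶠ t in l, ∀ x ∈ Icc (t - M - A) (t - M), |w x - L| ≤ δ := by
  obtain ⟨η, hη, hlow, hupp⟩ : ∃ η > 0, Real.exp (c * η) * (L - δ) < L - η ∧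
      Real.exp (c * η) * (L + η) < L + δ := by
    have hlow : Tendsto (fun η => Real.exp (c * η) * (L - δ) - (L - η)) (𝓝[>] 0) (𝓝 (-δ)) :=
      ((by fun_prop : Continuous fun η => Real.exp (c * η) * (L - δ) - (L - η)).tendsto'
        0 _ (by simp)).mono_left nhdsWithin_le_nhds
    have hupp : Tendsto (fun η => Real.exp (c * η) * (L + η)) (𝓝[>] 0) (𝓝 L) :=
      ((by fun_prop : Continuous fun η => Real.exp (c * η) * (L + η)).tendsto'
        0 _ (by simp)).mono_left nhdsWithin_le_nhds
    obtain ⟨η, hη, hlow, hupp⟩ := (eventually_mem_nhdsWithin.and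
      ((hlow.eventually_lt_const (neg_lt_zero.2 hδ)).and
        (hupp.eventually_lt_const (lt_add_of_pos_right L hδ)))).exists
    exact ⟨η, hη, by linarith, hupp⟩
  obtain ⟨M, T, hTS, hT⟩ := exists_finset_addSubmonoid_closure_net hd (isCompact_Icc (a := 0)
    (b := A + η)) (isOpen_Ioo (a := 0) (b := η)) (nonempty_Ioo.2 hη)
  refine ⟨M, ?_⟩
  have hnear : ∀ᶠ t in l, ∀ s ∈ T, w (t - s) ∈ Ioo (L - η) (L + η) :=
    (eventually_all_finset T).2 fun s hs => (hlim s (hTS s hs)).eventually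
      (Ioo_mem_nhds (by linarith) (by linarith))
  filter_upwards [hnear] with t ht x ⟨hx1, hx2⟩
  -- `t - s` lies in `(x, x + η)` and `t - s'` in `(x - η, x)`.
  obtain ⟨s, hs, hs1, hs2⟩ := hT (t - M - x) ⟨by linarith, by linarith⟩
  obtain ⟨s', hs', hs1', hs2'⟩ := hT (t - M - x + η) ⟨by linarith, by linarith⟩
  have hwx := hw.le_exp_mul (x := x) (t := t - s) (η := η)
    (by linarith) (by linarith)
  have hxw := hw.le_exp_mul (x := t - s') (t := x) (η := η)
    (by linarith) (by linarith)
  have hupp' := mul_le_mul_of_nonneg_left (ht s' hs').2.le (Real.exp_pos (c * η)).le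
  have hlow' : L - δ < w x :=
    lt_of_mul_lt_mul_left (hlow.trans ((ht s hs).1.trans_le hwx)) (Real.exp_pos _).le
  exact abs_le.2 ⟨by linarith, by linarith⟩

variable [Fintype ι]

/-- The conserved quantity of the renewal equation `w t = z t + ∑ j, p j * w (t - a j)`: the sum of
the integrals of `w` over the windows `[t - a j, t]`, weighted by `p`. -/
noncomputable def renewalPotential (p a : ι → ℝ) (w : ℝ → ℝ) (t : ℝ) : ℝ :=
  ∑ j, p j * ∫ x in (t - a j)..t, w x

lemma renewalPotential_const (B t : ℝ) :
    renewalPotential p a (fun _ => B) t = B * ∑ j, p j * a j := by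
  simp only [renewalPotential, intervalIntegral.integral_const, sub_sub_cancel, smul_eq_mul,
    Finset.mul_sum]
  exact Finset.sum_congr rfl fun j _ => by ring

lemma renewalPotential_mono {v : ℝ → ℝ} {t : ℝ} (hp : ∀ j, 0 ≤ p j) (ha : ∀ j, 0 ≤ a j)
    (hw : ∀ s t, IntervalIntegrable w volume s t) (hv : ∀ s t, IntervalIntegrable v volume s t)
    (hwv : ∀ j, ∀ x ∈ Icc (t - a j) t, w x ≤ v x) :
    renewalPotential p a w t ≤ renewalPotential p a v t :=
  Finset.sum_le_sum fun j _ => mul_le_mul_of_nonneg_left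
    (intervalIntegral.integral_mono_on (sub_le_self t (ha j)) (hw _ _) (hv _ _) (hwv j)) (hp j)

lemma renewalPotential_eq_integral_Iic (hp1 : ∑ j, p j = 1) (hw : ∀ t, IntegrableOn w (Iic t))
    (hz : Integrable z) (hren : ∀ t, w t = z t + ∑ j, p j * w (t - a j)) (t : ℝ) :
    renewalPotential p a w t = ∫ x in Iic t, z x := by
  have hpre : ∀ j, (fun x => x - a j) ⁻¹' Iic (t - a j) = Iic t := fun j => by ext x; simp
  have hshift : ∀ j, ∫ x in Iic t, w (x - a j) = ∫ x in Iic (t - a j), w x := fun j => by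
    rw [← hpre j]
    exact (measurePreserving_sub_right volume (a j)).setIntegral_preimage_emb
      (MeasurableEquiv.subRight (a j)).measurableEmbedding w _
  have hint : ∀ j, IntegrableOn (fun x => p j * w (x - a j)) (Iic t) := fun j => by
    rw [← hpre j]
    exact (((measurePreserving_sub_right volume (a j)).integrableOn_comp_preimage
      (MeasurableEquiv.subRight (a j)).measurableEmbedding).2 (hw _)).const_mul (p j)
  have hIic : ∫ x in Iic t, w x =
      (∫ x in Iic t, z x) + ∑ j, p j * ∫ x in Iic (t - a j), w x := by
    rw [integral_congr_ae (ae_of_all _ hren), integral_add hz.integrableOn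
      (integrable_finsetSum _ fun j _ => hint j), integral_finsetSum _ fun j _ => hint j]
    simp only [integral_const_mul, hshift]
  simp only [renewalPotential, ← intervalIntegral.integral_Iic_sub_Iic (hw _) (hw _), mul_sub,
    Finset.sum_sub_distrib, ← Finset.sum_mul, hp1]
  linarith

lemma tendsto_renewalPotential (hp1 : ∑ j, p j = 1) (hw : ∀ t, IntegrableOn w (Iic t))
    (hz : Integrable z) (hren : ∀ t, w t = z t + ∑ j, p j * w (t - a j)) :
    Tendsto (renewalPotential p a w) atTop (𝓝 (∫ x, z x)) := by
  simp only [funext (renewalPotential_eq_integral_Iic hp1 hw hz hren)]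
  exact (aecover_Iic tendsto_id).integral_tendsto_of_countably_generated hz

lemma isBoundedUnder_le_of_tendsto_renewalPotential (hp : ∀ j, 0 ≤ p j) (ha : ∀ j, 0 ≤ a j)
    (hμ : 0 < ∑ j, p j * a j) (hw : HasExpGrowth c w)
    (hwI : ∀ s t, IntervalIntegrable w volume s t)
    (hZ : Tendsto (renewalPotential p a w) atTop (𝓝 Z)) :
    IsBoundedUnder (· ≤ ·) atTop w := by
  set A := ∑ j, a j
  refine isBoundedUnder_of_eventually_le (a := Real.exp (c * A) * ((Z + 1) / ∑ j, p j * a j)) ?_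
  filter_upwards [hZ.eventually_lt_const (lt_add_one Z)] with t ht
  have hwindow : w t / Real.exp (c * A) * ∑ j, p j * a j ≤ renewalPotential p a w t := by
    rw [← renewalPotential_const _ t]
    refine renewalPotential_mono hp ha (by simp) hwI fun j x hx => ?_
    rw [div_le_iff₀' (Real.exp_pos _)]
    have haA : a j ≤ A := Finset.single_le_sum (fun i _ => ha i) (Finset.mem_univ j)
    exact hw.le_exp_mul hx.2 (by linarith [hx.1])
  rw [← div_le_iff₀' (Real.exp_pos _), le_div_iff₀ hμ]
  exact hwindow.trans ht.le

lemma eq_mul_of_tendsto_renewalPotential {l : Filter ℝ} [l.NeBot] (hl : l ≤ atTop)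
    (hp : ∀ j, 0 ≤ p j) (ha : ∀ j, 0 ≤ a j) (hw : HasExpGrowth c w)
    (hwI : ∀ s t, IntervalIntegrable w volume s t)
    (hd : Dense (AddSubgroup.closure (range a) : Set ℝ))
    (hlim : ∀ s ∈ AddSubmonoid.closure (range a), Tendsto (fun t => w (t - s)) l (𝓝 L))
    (hZ : Tendsto (renewalPotential p a w) atTop (𝓝 Z)) : Z = L * ∑ j, p j * a j := by
  set μ := ∑ j, p j * a j
  have hbound : ∀ δ > 0, |Z - L * μ| ≤ δ * μ := fun δ hδ => by
    obtain ⟨M, hM⟩ :=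
      exists_eventually_forall_window_abs_sub_le hw hd hlim (∑ j, a j) hδ
    have hZl : Tendsto (fun t => |renewalPotential p a w (t - M) - L * μ|) l (𝓝 |Z - L * μ|) :=
      ((hZ.comp ((tendsto_atTop_add_const_right _ (-M) tendsto_id).mono_left hl)).sub_const _).abs
    refine le_of_tendsto hZl ?_
    filter_upwards [hM] with t ht
    have hwindow : ∀ j, ∀ x ∈ Icc (t - M - a j) (t - M), |w x - L| ≤ δ := fun j x hx =>
      ht x ⟨by linarith [hx.1, Finset.single_le_sum (fun i _ => ha i) (Finset.mem_univ j)], hx.2⟩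
    have hupp := renewalPotential_mono hp ha hwI (v := fun _ => L + δ) (by simp) fun j x hx =>
      by linarith [(abs_le.1 (hwindow j x hx)).2]
    have hlow := renewalPotential_mono hp ha (w := fun _ => L - δ) (by simp) hwI fun j x hx =>
      by linarith [(abs_le.1 (hwindow j x hx)).1]
    rw [renewalPotential_const] at hupp hlow
    exact abs_le.2 ⟨by linarith, by linarith⟩
  have hzero : Tendsto (fun δ => δ * μ) (𝓝[>] 0) (𝓝 0) :=
    ((continuous_mul_const μ).tendsto' 0 0 (zero_mul μ)).mono_left nhdsWithin_le_nhds
  have hle : |Z - L * μ| ≤ 0 := ge_of_tendsto hzero (eventually_mem_nhdsWithin.mono hbound)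
  exact sub_eq_zero.1 (abs_nonpos_iff.1 hle)

theorem tendsto_of_renewal_of_hasExpGrowth [Nonempty ι] (hp : ∀ j, 0 < p j) (ha : ∀ j, 0 < a j)
    (hp1 : ∑ j, p j = 1) (hd : Dense (AddSubgroup.closure (range a) : Set ℝ))
    (hw : HasExpGrowth c w) (hwI : ∀ t, IntegrableOn w (Iic t)) (hz : Integrable z)
    (hz0 : Tendsto z atTop (𝓝 0))
    (hren : ∀ t, w t = z t + ∑ j, p j * w (t - a j)) :
    Tendsto w atTop (𝓝 ((∫ t, z t) / ∑ j, p j * a j)) := by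
  have hμ : 0 < ∑ j, p j * a j :=
    Finset.sum_pos (fun j _ => mul_pos (hp j) (ha j)) Finset.univ_nonempty
  have hwII : ∀ s t, IntervalIntegrable w volume s t := fun s t =>
    intervalIntegrable_iff.2 ((hwI (max s t)).mono_set fun x hx => hx.2)
  have hZ := tendsto_renewalPotential hp1 hwI hz hren
  have hle : IsBoundedUnder (· ≤ ·) atTop w := isBoundedUnder_le_of_tendsto_renewalPotential
    (fun j => (hp j).le) (fun j => (ha j).le) hμ hw hwII hZ
  have hge : IsBoundedUnder (· ≥ ·) atTop w :=
    isBoundedUnder_of_eventually_ge (.of_forall hw.nonneg)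
  have hdiff : Tendsto (fun t => w t - ∑ j, p j * w (t - a j)) atTop (𝓝 0) :=
    hz0.congr fun t => by rw [hren t, add_sub_cancel_right]
  have hcluster : ∀ {L : ℝ} {l : Filter ℝ} [l.NeBot], l ≤ atTop →
      (∀ s ∈ AddSubmonoid.closure (range a), Tendsto (fun t => w (t - s)) l (𝓝 L)) →
      L = (∫ t, z t) / ∑ j, p j * a j := fun hl hlim => by
    rw [eq_div_iff hμ.ne', eq_mul_of_tendsto_renewalPotential hl (fun j => (hp j).le)
      (fun j => (ha j).le) hw hwII hd hlim hZ]
  obtain ⟨u, hu, hwu⟩ := mapClusterPt_iff_ultrafilter.1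
    (isGreatest_mapClusterPt_limsup hge.isCoboundedUnder_le hle).1
  obtain ⟨v, hv, hwv⟩ := mapClusterPt_iff_ultrafilter.1
    (isLeast_mapClusterPt_liminf hle.isCoboundedUnder_ge hge).1
  refine tendsto_of_liminf_eq_limsup (hcluster hv fun s hs => ?_) (hcluster hu fun s hs =>
    tendsto_comp_sub_of_mem_addSubmonoid_closure hu hp hp1 hdiff (fun δ hδ =>
      eventually_lt_of_limsup_lt (lt_add_of_pos_right _ hδ) hle) hwu hs) hle hge
  have hneg := tendsto_comp_sub_of_mem_addSubmonoid_closure (f := fun t => -w t) hv hp hp1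
    (by simpa [neg_add_eq_sub] using hdiff.neg) (fun δ hδ =>
      (eventually_lt_of_lt_liminf (sub_lt_self _ hδ) hge).mono fun t ht => by linarith) hwv.neg hs
  simpa using hneg.neg

end Renewal

section MultiplicativeRenewal

lemma image_exp_neg_univ : (fun x => Real.exp (-x)) '' univ = Ioi 0 := by
  rw [image_univ, ← Real.range_exp]
  exact neg_surjective.range_comp Real.exp

lemma hasDerivWithinAt_exp_neg (x : ℝ) (s : Set ℝ) :
    HasDerivWithinAt (fun x => Real.exp (-x)) (-Real.exp (-x)) s x := by
  simpa using (hasDerivWithinAt_id x s).neg.exp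

lemma injOn_exp_neg (s : Set ℝ) : InjOn (fun x => Real.exp (-x)) s := fun _ _ _ _ h =>
  neg_injective (Real.exp_injective h)

section ExpNeg

variable {E : Type*} [NormedAddCommGroup E] [NormedSpace ℝ E] (f : ℝ → E)

lemma integral_exp_neg_smul_comp_exp_neg :
    ∫ x, Real.exp (-x) • f (Real.exp (-x)) = ∫ y in Ioi 0, f y := by
  rw [← image_exp_neg_univ, integral_image_eq_integral_abs_deriv_smul MeasurableSet.univ
    (fun x _ => hasDerivWithinAt_exp_neg x univ) (injOn_exp_neg univ)]
  simp

lemma integrable_exp_neg_smul_comp_exp_neg :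
    (Integrable fun x => Real.exp (-x) • f (Real.exp (-x))) ↔ IntegrableOn f (Ioi 0) := by
  rw [← image_exp_neg_univ, integrableOn_image_iff_integrableOn_abs_deriv_smul MeasurableSet.univ
    (fun x _ => hasDerivWithinAt_exp_neg x univ) (injOn_exp_neg univ)]
  simp

end ExpNeg

variable {ι : Type*} {r : ι → ℝ} {D s : ℝ} {W h : ℝ → ℝ}

lemma hasExpGrowth_exp_mul_comp_exp_neg {c : ℝ} (hc : 0 ≤ c) (hW0 : ∀ ε, 0 ≤ W ε)
    (hW : Monotone W) : HasExpGrowth c fun t => Real.exp (c * t) * W (Real.exp (-t)) where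
  rate_nonneg := hc
  nonneg t := mul_nonneg (Real.exp_pos _).le (hW0 _)
  add_le t u hu := by
    rw [← mul_assoc, ← Real.exp_add, ← mul_add, add_comm u t]
    gcongr
    exact hW (Real.exp_le_exp.2 (by linarith))

lemma integrableOn_Iic_exp_mul_comp_exp_neg {c B : ℝ} (hc : 0 < c) (hW0 : ∀ ε, 0 ≤ W ε)
    (hW : Monotone W) (hWB : ∀ ε, W ε ≤ B) (t : ℝ) :
    IntegrableOn (fun t => Real.exp (c * t) * W (Real.exp (-t))) (Iic t) := by
  refine (integrableOn_exp_mul_Iic hc t).mul_bdd (c := B)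
    (hW.measurable.comp (by fun_prop)).aestronglyMeasurable (.of_forall fun x => ?_)
  rw [Real.norm_of_nonneg (hW0 _)]
  exact hWB _

lemma dense_closure_range_log_inv
    (hd : Dense (AddSubgroup.closure (range fun j => Real.log (r j)) : Set ℝ)) :
    Dense (AddSubgroup.closure (range fun j => Real.log (r j)⁻¹) : Set ℝ) := by
  refine hd.mono ((AddSubgroup.closure_le _).2 ?_)
  rintro _ ⟨j, rfl⟩
  simpa [Real.log_inv] using neg_mem (AddSubgroup.subset_closure
    (mem_range_self (f := fun j => Real.log (r j)⁻¹) j))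

lemma exp_mul_sub_log_inv {x : ℝ} (hx : 0 < x) (c t : ℝ) :
    Real.exp (c * (t - Real.log x⁻¹)) = x ^ c * Real.exp (c * t) := by
  rw [Real.rpow_def_of_pos hx, ← Real.exp_add, Real.log_inv]
  ring_nf

variable [Fintype ι]

lemma exp_mul_comp_exp_neg_renewal (hr0 : ∀ j, 0 < r j)
    (hren : ∀ ε, 0 < ε → W ε = h ε + ∑ j, r j ^ s * W (ε / r j)) (t : ℝ) :
    Real.exp ((s - D) * t) * W (Real.exp (-t)) = Real.exp ((s - D) * t) * h (Real.exp (-t)) +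
      ∑ j, r j ^ D * (Real.exp ((s - D) * (t - Real.log (r j)⁻¹)) *
        W (Real.exp (-(t - Real.log (r j)⁻¹)))) := by
  rw [hren _ (Real.exp_pos _), mul_add, Finset.mul_sum]
  congr 1
  refine Finset.sum_congr rfl fun j _ => ?_
  have harg : Real.exp (-(t - Real.log (r j)⁻¹)) = Real.exp (-t) / r j := by
    rw [neg_sub, sub_eq_add_neg, Real.exp_add, Real.exp_log (inv_pos.2 (hr0 j))]
    ring
  rw [harg, exp_mul_sub_log_inv (hr0 j), ← mul_assoc, ← mul_assoc, ← mul_assoc,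
    ← Real.rpow_add (hr0 j), add_sub_cancel, mul_comm (Real.exp _)]

variable [Nonempty ι]

lemma sum_rpow_mul_log_inv_pos (hr0 : ∀ j, 0 < r j) (hr1 : ∀ j, r j < 1) :
    0 < ∑ j, r j ^ D * Real.log (r j)⁻¹ :=
  Finset.sum_pos (fun j _ => mul_pos (Real.rpow_pos_of_pos (hr0 j) D)
    (Real.log_pos (one_lt_inv₀ (hr0 j) |>.2 (hr1 j)))) Finset.univ_nonempty

theorem tendsto_mul_rpow_of_renewal {B : ℝ} (hr0 : ∀ j, 0 < r j) (hr1 : ∀ j, r j < 1)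
    (hD : ∑ j, r j ^ D = 1) (hDs : D < s)
    (hd : Dense (AddSubgroup.closure (range fun j => Real.log (r j)) : Set ℝ))
    (hW0 : ∀ ε, 0 ≤ W ε) (hW : Monotone W) (hWB : ∀ ε, W ε ≤ B)
    (hren : ∀ ε, 0 < ε → W ε = h ε + ∑ j, r j ^ s * W (ε / r j))
    (hh : IntegrableOn (fun ε => ε ^ (D - s - 1) * h ε) (Ioi 0))
    (hh0 : Tendsto (fun ε => h ε * ε ^ (D - s)) (𝓝[>] 0) (𝓝 0)) :
    Tendsto (fun ε => W ε * ε ^ (D - s)) (𝓝[>] 0)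
      (𝓝 ((∫ ε in Ioi 0, ε ^ (D - s - 1) * h ε) / ∑ j, r j ^ D * Real.log (r j)⁻¹)) := by
  have hpow : ∀ t, Real.exp (-t) ^ (D - s) = Real.exp ((s - D) * t) := fun t => by
    rw [← Real.exp_mul]
    ring_nf
  have hz : (fun t => Real.exp (-t) • (Real.exp (-t) ^ (D - s - 1) * h (Real.exp (-t)))) =
      fun t => Real.exp ((s - D) * t) * h (Real.exp (-t)) := by
    ext t
    rw [← hpow, Real.rpow_sub_one (Real.exp_pos _).ne', smul_eq_mul]
    field_simp
  have hexp : Tendsto (fun t => Real.exp (-t)) atTop (𝓝[>] 0) :=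
    tendsto_nhdsWithin_iff.2 ⟨Real.tendsto_exp_neg_atTop_nhds_zero,
      .of_forall fun t => Real.exp_pos _⟩
  have hlim := tendsto_of_renewal_of_hasExpGrowth
    (w := fun t => Real.exp ((s - D) * t) * W (Real.exp (-t)))
    (z := fun t => Real.exp ((s - D) * t) * h (Real.exp (-t)))
    (fun j => Real.rpow_pos_of_pos (hr0 j) D)
    (fun j => Real.log_pos (one_lt_inv₀ (hr0 j) |>.2 (hr1 j))) hD (dense_closure_range_log_inv hd)
    (hasExpGrowth_exp_mul_comp_exp_neg (sub_pos.2 hDs).le hW0 hW)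
    (integrableOn_Iic_exp_mul_comp_exp_neg (sub_pos.2 hDs) hW0 hW hWB)
    (hz ▸ (integrable_exp_neg_smul_comp_exp_neg _).2 hh)
    ((hh0.comp hexp).congr fun t => by rw [Function.comp_apply, hpow, mul_comm])
    (exp_mul_comp_exp_neg_renewal hr0 hren)
  rw [← hz, integral_exp_neg_smul_comp_exp_neg fun ε => ε ^ (D - s - 1) * h ε] at hlim
  refine (hlim.comp (tendsto_neg_atBot_atTop.comp Real.tendsto_log_nhdsGT_zero)).congr' ?_
  filter_upwards [self_mem_nhdsWithin] with ε hε
  simp only [Function.comp_apply, ← hpow, neg_neg, Real.exp_log hε, mul_comm]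

end MultiplicativeRenewal

section Steiner

/-- The diphase Steiner-like condition on the volume `V ε` of an inner `ε`-neighborhood in dimension
`d`: a polynomial with coefficients `κ 0, …, κ (d - 1)` below `g`, and the constant `-κ d` from `g`
on. -/
structure IsDiphaseSteiner (d : ℕ) (g : ℝ) (κ : ℕ → ℝ) (V : ℝ → ℝ) : Prop where
  eq_sum {ε : ℝ} (hε : 0 < ε) (hεg : ε < g) :
    V ε = ∑ m ∈ Finset.range d, κ m * ε ^ ((d : ℝ) - m)
  eq_neg {ε : ℝ} (hgε : g ≤ ε) : V ε = -κ d

namespace IsDiphaseSteiner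

variable {d : ℕ} {g D : ℝ} {κ : ℕ → ℝ} {V : ℝ → ℝ}

lemma sub_pos_of_mem_range (hD : (d : ℝ) - 1 < D) {m : ℕ} (hm : m ∈ Finset.range d) :
    0 < D - m := by
  have : (m : ℝ) + 1 ≤ d := by exact_mod_cast Finset.mem_range.1 hm
  linarith

lemma rpow_mul_eq_sum (hV : IsDiphaseSteiner d g κ V) {x ε : ℝ} (hε : ε ∈ Ioo 0 g) :
    ε ^ x * V ε = ∑ m ∈ Finset.range d, κ m * ε ^ (x + d - m) := by
  rw [hV.eq_sum hε.1 hε.2, Finset.mul_sum]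
  refine Finset.sum_congr rfl fun m _ => ?_
  rw [mul_left_comm, ← Real.rpow_add hε.1, add_sub_assoc]

lemma rpow_mul_eq_neg (hV : IsDiphaseSteiner d g κ V) (x : ℝ) :
    EqOn (fun ε => ε ^ x * V ε) (fun ε => -κ d * ε ^ x) (Ici g) := fun ε hε => by
  simp only [hV.eq_neg hε, mul_comm]

lemma integrableOn_Ioo_mul_rpow (hD : (d : ℝ) - 1 < D) (hg : 0 < g) {m : ℕ}
    (hm : m ∈ Finset.range d) :
    IntegrableOn (fun ε => κ m * ε ^ (D - d - 1 + d - m)) (Ioo 0 g) :=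
  ((intervalIntegral.integrableOn_Ioo_rpow_iff hg).2
    (by linarith [sub_pos_of_mem_range hD hm])).const_mul _

lemma integrableOn_Ioo (hV : IsDiphaseSteiner d g κ V) (hD : (d : ℝ) - 1 < D) (hg : 0 < g) :
    IntegrableOn (fun ε => ε ^ (D - d - 1) * V ε) (Ioo 0 g) :=
  IntegrableOn.congr_fun (integrable_finsetSum _ fun _ hm => integrableOn_Ioo_mul_rpow hD hg hm)
    (fun _ hε => (hV.rpow_mul_eq_sum hε).symm) measurableSet_Ioo

lemma integrableOn_Ici (hV : IsDiphaseSteiner d g κ V) (hDd : D < d) (hg : 0 < g) :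
    IntegrableOn (fun ε => ε ^ (D - d - 1) * V ε) (Ici g) := by
  refine IntegrableOn.congr_fun ?_ (hV.rpow_mul_eq_neg _).symm measurableSet_Ici
  rw [integrableOn_Ici_iff_integrableOn_Ioi]
  exact (integrableOn_Ioi_rpow_of_lt (by linarith) hg).const_mul _

lemma integrableOn_Ioi (hV : IsDiphaseSteiner d g κ V) (hD : (d : ℝ) - 1 < D) (hDd : D < d)
    (hg : 0 < g) : IntegrableOn (fun ε => ε ^ (D - d - 1) * V ε) (Ioi 0) := by
  rw [← Ioo_union_Ici_eq_Ioi hg]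
  exact (hV.integrableOn_Ioo hD hg).union (hV.integrableOn_Ici hDd hg)

lemma setIntegral_Ioo (hV : IsDiphaseSteiner d g κ V) (hD : (d : ℝ) - 1 < D) (hg : 0 < g) :
    ∫ ε in Ioo 0 g, ε ^ (D - d - 1) * V ε =
      ∑ m ∈ Finset.range d, g ^ (D - m) / (D - m) * κ m := by
  rw [setIntegral_congr_fun measurableSet_Ioo fun ε hε => hV.rpow_mul_eq_sum hε,
    integral_finsetSum _ fun _ hm => integrableOn_Ioo_mul_rpow hD hg hm]
  refine Finset.sum_congr rfl fun m hm => ?_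
  have hm0 := sub_pos_of_mem_range hD hm
  have hexp : D - d - 1 + d - m + 1 = D - m := by ring
  rw [integral_const_mul, ← integral_Ioc_eq_integral_Ioo, ← intervalIntegral.integral_of_le hg.le,
    integral_rpow (.inl (by linarith)), hexp, Real.zero_rpow hm0.ne', sub_zero, mul_comm]

lemma setIntegral_Ici (hV : IsDiphaseSteiner d g κ V) (hDd : D < d) (hg : 0 < g) :
    ∫ ε in Ici g, ε ^ (D - d - 1) * V ε = g ^ (D - d) / (D - d) * κ d := by
  rw [setIntegral_congr_fun measurableSet_Ici (hV.rpow_mul_eq_neg _), integral_const_mul,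
    integral_Ici_eq_integral_Ioi, integral_Ioi_rpow_of_lt (by linarith) hg, sub_add_cancel]
  ring

lemma setIntegral_Ioi_eq_add (hV : IsDiphaseSteiner d g κ V) (hD : (d : ℝ) - 1 < D) (hDd : D < d)
    (hg : 0 < g) : ∫ ε in Ioi 0, ε ^ (D - d - 1) * V ε =
      (∫ ε in Ioo 0 g, ε ^ (D - d - 1) * V ε) + ∫ ε in Ici g, ε ^ (D - d - 1) * V ε := by
  rw [← Ioo_union_Ici_eq_Ioi hg, setIntegral_union
    (disjoint_left.2 fun _ h h' => h.2.not_ge h') measurableSet_Ici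
    (hV.integrableOn_Ioo hD hg) (hV.integrableOn_Ici hDd hg)]

lemma setIntegral_Ioi (hV : IsDiphaseSteiner d g κ V) (hD : (d : ℝ) - 1 < D) (hDd : D < d)
    (hg : 0 < g) : ∫ ε in Ioi 0, ε ^ (D - d - 1) * V ε =
      ∑ m ∈ Finset.range (d + 1), g ^ (D - m) / (D - m) * κ m := by
  rw [hV.setIntegral_Ioi_eq_add hD hDd hg, hV.setIntegral_Ioo hD hg, hV.setIntegral_Ici hDd hg,
    Finset.sum_range_succ]

lemma setIntegral_Ioi_pos (hV : IsDiphaseSteiner d g κ V) (hD : (d : ℝ) - 1 < D) (hDd : D < d)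
    (hg : 0 < g) (hV0 : ∀ ε, 0 ≤ V ε) (hκ : κ d < 0) :
    0 < ∫ ε in Ioi 0, ε ^ (D - d - 1) * V ε := by
  rw [hV.setIntegral_Ioi_eq_add hD hDd hg, hV.setIntegral_Ici hDd hg]
  exact add_pos_of_nonneg_of_pos
    (setIntegral_nonneg measurableSet_Ioo fun ε hε =>
      mul_nonneg (Real.rpow_nonneg hε.1.le _) (hV0 ε))
    (mul_pos_of_neg_of_neg (div_neg_of_pos_of_neg (Real.rpow_pos_of_pos hg _) (sub_neg.2 hDd)) hκ)

lemma tendsto_mul_rpow (hV : IsDiphaseSteiner d g κ V) (hD : (d : ℝ) - 1 < D) (hg : 0 < g) :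
    Tendsto (fun ε => V ε * ε ^ (D - d)) (𝓝[>] 0) (𝓝 0) := by
  have hterm : ∀ m ∈ Finset.range d, Tendsto (fun ε : ℝ => κ m * ε ^ (D - d + d - m)) (𝓝[>] 0)
      (𝓝 0) := fun m hm => by
    have hm0 := sub_pos_of_mem_range hD hm
    rw [sub_add_cancel]
    exact (((Real.continuous_rpow_const hm0.le).const_mul _).tendsto' 0 0
      (by rw [Real.zero_rpow hm0.ne', mul_zero])).mono_left nhdsWithin_le_nhds
  have hsum := tendsto_finsetSum _ hterm
  rw [Finset.sum_const_zero] at hsum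
  refine hsum.congr' ?_
  filter_upwards [Ioo_mem_nhdsGT hg] with ε hε
  rw [mul_comm, hV.rpow_mul_eq_sum hε]

end IsDiphaseSteiner

end Steiner

section FrontierDistance

variable {E : Type*} [NormedAddCommGroup E] [NormedSpace ℝ E] [FiniteDimensional ℝ E]
  {A S T : Set E} {x y : E}

lemma exists_mem_frontier_dist_le (hx : x ∈ A) (hy : y ∉ interior A) :
    ∃ q ∈ frontier A, dist x q ≤ dist x y := by
  by_cases hyA : y ∈ A
  · exact ⟨y, ⟨subset_closure hyA, hy⟩, le_rfl⟩
  · obtain ⟨q, hq, hxq⟩ :=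
      exists_mem_frontier_infDist_compl_eq_dist hx (ne_univ_iff_exists_notMem _ |>.2 ⟨y, hyA⟩)
    exact ⟨q, hq, hxq ▸ Metric.infDist_le_dist_of_mem hyA⟩

lemma infEDist_eq_infEDist_of_frontier_subset (hx : x ∈ A) (hST : S ⊆ T) (hAS : frontier A ⊆ S)
    (hTS : T ∩ interior A ⊆ S) : Metric.infEDist x T = Metric.infEDist x S := by
  refine (Metric.infEDist_anti hST).antisymm (Metric.le_infEDist.2 fun y hyT => ?_)
  by_cases hy : y ∈ interior A
  · exact Metric.infEDist_le_edist_of_mem (hTS ⟨hyT, hy⟩)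
  · obtain ⟨q, hq, hxq⟩ := exists_mem_frontier_dist_le hx hy
    refine (Metric.infEDist_le_edist_of_mem (hAS hq)).trans ?_
    simpa only [edist_dist] using ENNReal.ofReal_le_ofReal hxq

end FrontierDistance

section Similitude

lemma infEDist_image_of_dist_eq_mul {X Y : Type*} [PseudoMetricSpace X] [PseudoMetricSpace Y]
    {φ : X → Y} {r : ℝ} (hr : 0 < r) (hφ : ∀ x y, dist (φ x) (φ y) = r * dist x y) (x : X)
    (t : Set X) : Metric.infEDist (φ x) (φ '' t) = ENNReal.ofReal r * Metric.infEDist x t := by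
  have hedist : ∀ y, edist (φ x) (φ y) = ENNReal.ofReal r * edist x y := fun y => by
    rw [edist_dist, hφ, ENNReal.ofReal_mul hr.le, edist_dist]
  simp only [Metric.infEDist, iInf_image, hedist,
    ENNReal.mul_iInf_of_ne (ENNReal.ofReal_pos.2 hr).ne' ENNReal.ofReal_ne_top]

section NormedSpace

variable {X E : Type*} [PseudoMetricSpace X] [NormedAddCommGroup E] [NormedSpace ℝ E]
  {φ : X → E} {r : ℝ}

lemma isometry_inv_smul_of_dist_eq_mul (hr : 0 < r)
    (hφ : ∀ x y, dist (φ x) (φ y) = r * dist x y) : Isometry fun x => r⁻¹ • φ x :=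
  Isometry.of_dist_eq fun x y => by
    rw [dist_smul₀, hφ, Real.norm_of_nonneg (inv_nonneg.2 hr.le), inv_mul_cancel_left₀ hr.ne']

lemma isHomeomorph_of_dist_eq_mul [StrictConvexSpace ℝ E] [FiniteDimensional ℝ E] {φ : E → E}
    (hr : 0 < r) (hφ : ∀ x y, dist (φ x) (φ y) = r * dist x y) : IsHomeomorph φ := by
  have : Inhabited E := ⟨0⟩
  let e := (isometry_inv_smul_of_dist_eq_mul hr hφ).affineIsometryOfStrictConvexSpace
    |>.toAffineIsometryEquiv rfl
  convert (e.toHomeomorph.trans (Homeomorph.smulOfNeZero r hr.ne')).isHomeomorph using 1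
  exact funext fun x => (smul_inv_smul₀ hr.ne' (φ x)).symm

end NormedSpace

open scoped Pointwise in
lemma volume_image_of_dist_eq_mul {E : Type*} [NormedAddCommGroup E] [InnerProductSpace ℝ E]
    [FiniteDimensional ℝ E] [MeasurableSpace E] [BorelSpace E] {φ : E → E} {r : ℝ} (hr : 0 < r)
    (hφ : ∀ x y, dist (φ x) (φ y) = r * dist x y) (s : Set E) :
    volume (φ '' s) = ENNReal.ofReal (r ^ Module.finrank ℝ E) * volume s := by
  have himage : φ '' s = r • (fun x => r⁻¹ • φ x) '' s := by
    simp only [← image_smul, image_image, smul_inv_smul₀ hr.ne']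
  rw [himage, Measure.addHaar_smul_of_nonneg _ hr.le,
    ← InnerProductSpace.euclideanHausdorffMeasure_eq_volume,
    (isometry_inv_smul_of_dist_eq_mul hr hφ).euclideanHausdorffMeasure_image]

end Similitude

section ConvexBody

variable {E : Type*} [NormedAddCommGroup E] [NormedSpace ℝ E] {C : Set E} {x₀ : E} {ρ ε : ℝ}

lemma cthickening_subset_image_homothety (hC : IsCompact C) (hconv : Convex ℝ C) (hρ : 0 < ρ)
    (hball : Metric.closedBall x₀ ρ ⊆ C) (hε : 0 < ε) :
    Metric.cthickening ε C ⊆ AffineMap.homothety x₀ (1 + ε / ρ) '' C := by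
  intro x hx
  rw [hC.cthickening_eq_biUnion_closedBall hε.le] at hx
  obtain ⟨c, hc, hxc⟩ := mem_iUnion₂.1 hx
  have hv : x₀ + (ρ / ε) • (x - c) ∈ C := by
    apply hball
    rw [Metric.mem_closedBall, dist_eq_norm] at hxc ⊢
    rw [add_sub_cancel_left, norm_smul, Real.norm_of_nonneg (by positivity),
      div_mul_eq_mul_div, div_le_iff₀ hε]
    exact mul_le_mul_of_nonneg_left hxc hρ.le
  refine ⟨(1 / (1 + ε / ρ)) • c + ((ε / ρ) / (1 + ε / ρ)) • (x₀ + (ρ / ε) • (x - c)),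
    hconv hc hv (by positivity) (by positivity) (by field_simp), ?_⟩
  simp only [AffineMap.homothety_apply, vsub_eq_sub, vadd_eq_add]
  match_scalars <;> field_simp <;> ring

lemma tendsto_pow_sub_one_mul_rpow (n : ℕ) {x : ℝ} (hx : -1 < x) :
    Tendsto (fun ε : ℝ => ((1 + ε / ρ) ^ n - 1) * ε ^ x) (𝓝[>] 0) (𝓝 0) := by
  have hslope :=
    ((((hasDerivAt_id (0 : ℝ)).div_const ρ).const_add 1).pow n).tendsto_slope_zero_right
  have hpow : Tendsto (fun ε : ℝ => ε ^ (x + 1)) (𝓝[>] 0) (𝓝 0) :=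
    ((Real.continuous_rpow_const (by linarith)).tendsto' 0 0
      (Real.zero_rpow (by linarith))).mono_left nhdsWithin_le_nhds
  have hprod := hslope.mul hpow
  rw [mul_zero] at hprod
  refine hprod.congr' ?_
  filter_upwards [self_mem_nhdsWithin] with ε (hε : 0 < ε)
  rw [Real.rpow_add_one hε.ne']
  simp only [Pi.pow_apply, id_eq, zero_add, zero_div, add_zero, one_pow, smul_eq_mul]
  field_simp

variable [FiniteDimensional ℝ E] [MeasurableSpace E] [BorelSpace E]
  (μ : Measure E) [μ.IsAddHaarMeasure]

lemma addHaar_real_cthickening_diff_le (hC : IsCompact C) (hconv : Convex ℝ C) (hρ : 0 < ρ)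
    (hball : Metric.closedBall x₀ ρ ⊆ C) (hε : 0 < ε) :
    μ.real (Metric.cthickening ε C \ C) ≤ ((1 + ε / ρ) ^ Module.finrank ℝ E - 1) * μ.real C := by
  have hfin : μ (Metric.cthickening ε C) ≠ ⊤ := hC.isBounded.cthickening.measure_lt_top.ne
  have himage : μ (AffineMap.homothety x₀ (1 + ε / ρ) '' C) =
      ENNReal.ofReal ((1 + ε / ρ) ^ Module.finrank ℝ E) * μ C := by
    rw [Measure.addHaar_image_homothety, abs_of_nonneg (by positivity)]
  have hle : μ (Metric.cthickening ε C) ≤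
      ENNReal.ofReal ((1 + ε / ρ) ^ Module.finrank ℝ E) * μ C :=
    himage ▸ measure_mono (cthickening_subset_image_homothety hC hconv hρ hball hε)
  have hreal := ENNReal.toReal_mono
    (ENNReal.mul_ne_top ENNReal.ofReal_ne_top hC.measure_lt_top.ne) hle
  rw [ENNReal.toReal_mul, ENNReal.toReal_ofReal (by positivity)] at hreal
  rw [measureReal_sdiff (Metric.self_subset_cthickening C) hC.measurableSet hfin, sub_mul, one_mul]
  exact sub_le_sub_right hreal _

lemma tendsto_addHaar_real_cthickening_diff_mul_rpow (hC : IsCompact C) (hconv : Convex ℝ C)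
    (hint : (interior C).Nonempty) {x : ℝ} (hx : -1 < x) :
    Tendsto (fun ε => μ.real (Metric.cthickening ε C \ C) * ε ^ x) (𝓝[>] 0) (𝓝 0) := by
  obtain ⟨x₀, hx₀⟩ := hint
  obtain ⟨ρ, hρ, hball⟩ :=
    Metric.nhds_basis_closedBall.mem_iff.1 (mem_interior_iff_mem_nhds.1 hx₀)
  have hlim := (tendsto_pow_sub_one_mul_rpow (ρ := ρ) (Module.finrank ℝ E) hx).const_mul (μ.real C)
  rw [mul_zero] at hlim
  refine squeeze_zero' ?_ ?_ hlim <;> filter_upwards [self_mem_nhdsWithin] with ε (hε : 0 < ε)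
  · exact mul_nonneg measureReal_nonneg (Real.rpow_nonneg hε.le _)
  · rw [← mul_assoc, mul_comm (μ.real C)]
    exact mul_le_mul_of_nonneg_right
      (addHaar_real_cthickening_diff_le μ hC hconv hρ hball hε) (Real.rpow_nonneg hε.le _)

end ConvexBody

/-- `F` is the attractor, and `C` its convex hull, of the similitudes `φ j` with ratios `r j < 1`,
subject to the Tileset, Nontriviality and Pearse–Winter conditions. -/
structure IsPearseWinterIFS {ι E : Type*} [NormedAddCommGroup E] [NormedSpace ℝ E]
    (φ : ι → E → E) (r : ι → ℝ) (F C : Set E) : Prop where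
  ratio_pos (j : ι) : 0 < r j
  ratio_lt_one (j : ι) : r j < 1
  dist_map (j : ι) (x y : E) : dist (φ j x) (φ j y) = r j * dist x y
  isCompact : IsCompact F
  nonempty : F.Nonempty
  eq_iUnion : F = ⋃ j, φ j '' F
  hull_eq : C = convexHull ℝ F
  image_interior_subset (j : ι) : φ j '' interior C ⊆ interior C
  disjoint_image_interior (j k : ι) (hjk : j ≠ k) :
    Disjoint (φ j '' interior C) (φ k '' interior C)
  nontrivial : ¬ interior C ⊆ ⋃ j, φ j '' C
  frontier_subset : frontier C ⊆ F

/-- The generating tile `T₀ = C \ Φ(C)` of the self-similar tiling of the convex hull `C`. -/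
def generatingTile {ι E : Type*} (φ : ι → E → E) (C : Set E) : Set E := C \ ⋃ j, φ j '' C

namespace IsPearseWinterIFS

variable {ι E : Type*} {φ : ι → E → E} {r : ι → ℝ} {F C : Set E}

section NormedSpace

variable [NormedAddCommGroup E] [NormedSpace ℝ E] (h : IsPearseWinterIFS φ r F C)
include h

lemma nonempty_index : Nonempty ι := by
  obtain ⟨x, hx⟩ := h.nonempty
  obtain ⟨j, -⟩ := mem_iUnion.1 (h.eq_iUnion ▸ hx)
  exact ⟨j⟩

lemma subset_hull : F ⊆ C := h.hull_eq ▸ subset_convexHull ℝ F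

lemma convex_hull : Convex ℝ C := h.hull_eq ▸ convex_convexHull ℝ F

lemma isClosed_hull : IsClosed C :=
  frontier_subset_iff_isClosed.1 (h.frontier_subset.trans h.subset_hull)

lemma isBounded_hull : Bornology.IsBounded C :=
  h.hull_eq ▸ isBounded_convexHull.2 h.isCompact.isBounded

lemma isCompact_hull [FiniteDimensional ℝ E] : IsCompact C :=
  Metric.isCompact_of_isClosed_isBounded h.isClosed_hull h.isBounded_hull

lemma nonempty_interior_hull : (interior C).Nonempty := by
  obtain ⟨x, hx, -⟩ := not_subset.1 h.nontrivial
  exact ⟨x, hx⟩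

lemma closure_interior_hull : closure (interior C) = C := by
  rw [h.convex_hull.closure_interior_eq_closure_of_nonempty_interior h.nonempty_interior_hull,
    h.isClosed_hull.closure_eq]

lemma image_attractor_subset (j : ι) : φ j '' F ⊆ F :=
  (subset_iUnion (fun j => φ j '' F) j).trans h.eq_iUnion.ge

lemma attractor_subset_iUnion_image_hull : F ⊆ ⋃ j, φ j '' C :=
  h.eq_iUnion.le.trans (iUnion_mono fun _ => image_mono h.subset_hull)

lemma attractor_subset_compl_generatingTile : F ⊆ (generatingTile φ C)ᶜ := fun _ hx hxT =>
  hxT.2 (h.attractor_subset_iUnion_image_hull hx)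

lemma generatingTile_eq_interior_diff : generatingTile φ C = interior C \ ⋃ j, φ j '' C := by
  refine (sdiff_subset_sdiff_left interior_subset).antisymm' fun x hx => ⟨?_, hx.2⟩
  by_contra hxC
  exact hx.2 (h.attractor_subset_iUnion_image_hull
    (h.frontier_subset ⟨subset_closure hx.1, hxC⟩))

lemma generatingTile_subset_cthickening {ε : ℝ} (hε : Metric.diam C ≤ ε) :
    generatingTile φ C ⊆ Metric.cthickening ε F := fun x hx => by
  obtain ⟨y, hy⟩ := h.nonempty
  exact Metric.mem_cthickening_of_dist_le x y ε F hy
    ((Metric.dist_le_diam_of_mem h.isBounded_hull hx.1 (h.subset_hull hy)).trans hε)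

lemma nonempty_generatingTile : (generatingTile φ C).Nonempty :=
  h.generatingTile_eq_interior_diff ▸ sdiff_nonempty.2 h.nontrivial

end NormedSpace

section FiniteDimensional

variable [NormedAddCommGroup E] [NormedSpace ℝ E] [StrictConvexSpace ℝ E] [FiniteDimensional ℝ E]
  (h : IsPearseWinterIFS φ r F C)
include h

lemma isHomeomorph (j : ι) : IsHomeomorph (φ j) :=
  isHomeomorph_of_dist_eq_mul (h.ratio_pos j) (h.dist_map j)

lemma isClosed_image_hull (j : ι) : IsClosed (φ j '' C) :=
  (h.isHomeomorph j).isClosedMap _ h.isClosed_hull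

lemma frontier_image_hull (j : ι) : frontier (φ j '' C) = φ j '' frontier C :=
  ((h.isHomeomorph j).image_frontier C).symm

lemma frontier_image_hull_subset (j : ι) : frontier (φ j '' C) ⊆ φ j '' F :=
  h.frontier_image_hull j ▸ image_mono h.frontier_subset

lemma closure_image_interior_hull (j : ι) : closure (φ j '' interior C) = φ j '' C := by
  rw [← (h.isHomeomorph j).image_closure, h.closure_interior_hull]

lemma image_hull_subset (j : ι) : φ j '' C ⊆ C := by
  rw [← h.closure_image_interior_hull j]
  exact closure_minimal ((h.image_interior_subset j).trans interior_subset) h.isClosed_hull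

lemma disjoint_interior_image_hull {j k : ι} (hjk : j ≠ k) :
    Disjoint (interior (φ j '' C)) (φ k '' C) := by
  rw [← h.closure_image_interior_hull k]
  refine Disjoint.closure_right ?_ isOpen_interior
  rw [← (h.isHomeomorph j).image_interior]
  exact h.disjoint_image_interior j k hjk

lemma attractor_inter_interior_image_hull_subset (j : ι) :
    F ∩ interior (φ j '' C) ⊆ φ j '' F := by
  rintro y ⟨hyF, hyj⟩
  obtain ⟨k, hk⟩ := mem_iUnion.1 (h.eq_iUnion ▸ hyF)
  obtain rfl : j = k := by
    by_contra hjk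
    exact disjoint_left.1 (h.disjoint_interior_image_hull hjk) hyj
      (image_mono h.subset_hull hk)
  exact hk

/-- The boundary of `φ j '' C` lies in `φ j '' F` and separates `φ j '' C` from the rest of `F`, so
the nearest point of `F` can be chosen in `φ j '' F`. -/
lemma infEDist_map_attractor (j : ι) {x : E} (hx : x ∈ C) :
    Metric.infEDist (φ j x) F = ENNReal.ofReal (r j) * Metric.infEDist x F := by
  rw [← infEDist_image_of_dist_eq_mul (h.ratio_pos j) (h.dist_map j)]
  exact infEDist_eq_infEDist_of_frontier_subset (mem_image_of_mem _ hx)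
    (h.image_attractor_subset j) (h.frontier_image_hull_subset j)
    (h.attractor_inter_interior_image_hull_subset j)

lemma image_hull_inter_cthickening (j : ι) (ε : ℝ) :
    φ j '' C ∩ Metric.cthickening ε F = φ j '' (C ∩ Metric.cthickening (ε / r j) F) := by
  have hiff : ∀ x ∈ C, φ j x ∈ Metric.cthickening ε F ↔ x ∈ Metric.cthickening (ε / r j) F :=
    fun x hx => by
      have hr := ENNReal.ofReal_pos.2 (h.ratio_pos j)
      rw [Metric.mem_cthickening_iff, Metric.mem_cthickening_iff, h.infEDist_map_attractor j hx,
        ENNReal.ofReal_div_of_pos (h.ratio_pos j),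
        ENNReal.le_div_iff_mul_le (.inl hr.ne') (.inl ENNReal.ofReal_ne_top), mul_comm]
  ext y
  constructor
  · rintro ⟨⟨x, hx, rfl⟩, hy⟩
    exact ⟨x, ⟨hx, (hiff x hx).1 hy⟩, rfl⟩
  · rintro ⟨x, ⟨hx, hxF⟩, rfl⟩
    exact ⟨⟨x, hx, rfl⟩, (hiff x hx).2 hxF⟩

variable [Finite ι]

lemma isOpen_generatingTile : IsOpen (generatingTile φ C) :=
  h.generatingTile_eq_interior_diff ▸
    isOpen_interior.sdiff (isClosed_iUnion_of_finite h.isClosed_image_hull)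

lemma frontier_generatingTile_subset :
    frontier (generatingTile φ C) ⊆ ⋃ j, frontier (φ j '' C) := by
  intro q hq
  rw [h.isOpen_generatingTile.frontier_eq] at hq
  have hqC : q ∈ C := closure_minimal sdiff_subset h.isClosed_hull hq.1
  obtain ⟨j, hj⟩ := mem_iUnion.1 (by_contra fun hqK => hq.2 ⟨hqC, hqK⟩)
  have hdisj : Disjoint (generatingTile φ C) (interior (φ j '' C)) :=
    disjoint_sdiff_left.mono_right (interior_subset.trans (subset_iUnion (fun j => φ j '' C) j))
  exact mem_iUnion.2 ⟨j, subset_closure hj,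
    disjoint_left.1 (hdisj.closure_left isOpen_interior) hq.1⟩

lemma frontier_generatingTile_subset_attractor : frontier (generatingTile φ C) ⊆ F :=
  h.frontier_generatingTile_subset.trans (iUnion_subset fun j =>
    (h.frontier_image_hull_subset j).trans (h.image_attractor_subset j))

lemma infEDist_compl_generatingTile {x : E} (hx : x ∈ generatingTile φ C) :
    Metric.infEDist x (generatingTile φ C)ᶜ = Metric.infEDist x F :=
  infEDist_eq_infEDist_of_frontier_subset hx h.attractor_subset_compl_generatingTile
    h.frontier_generatingTile_subset_attractor fun _ hy => absurd (interior_subset hy.2) hy.1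

end FiniteDimensional

section Volume

variable [NormedAddCommGroup E] [InnerProductSpace ℝ E] [FiniteDimensional ℝ E]
  [MeasurableSpace E] [BorelSpace E] (h : IsPearseWinterIFS φ r F C)
include h

lemma volume_image (j : ι) (s : Set E) :
    volume (φ j '' s) = ENNReal.ofReal (r j ^ Module.finrank ℝ E) * volume s :=
  volume_image_of_dist_eq_mul (h.ratio_pos j) (h.dist_map j) s

lemma volume_frontier_image_hull (j : ι) : volume (frontier (φ j '' C)) = 0 := by
  rw [h.frontier_image_hull, h.volume_image, h.convex_hull.addHaar_frontier volume, mul_zero]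

lemma aedisjoint_image_hull : Pairwise (Function.onFun (AEDisjoint volume) fun j => φ j '' C) := by
  refine fun j k hjk => measure_mono_null ?_ (h.volume_frontier_image_hull j)
  exact fun x hx => ⟨subset_closure hx.1, fun hint =>
    disjoint_left.1 (h.disjoint_interior_image_hull hjk) hint hx.2⟩

lemma volume_hull_inter_ne_top (N : Set E) : volume (C ∩ N) ≠ ⊤ :=
  measure_ne_top_of_subset inter_subset_left h.isCompact_hull.measure_ne_top

lemma volume_real_hull_inter_cthickening_mono :
    Monotone fun ε => volume.real (C ∩ Metric.cthickening ε F) := fun _ _ hε =>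
  measureReal_mono (inter_subset_inter_right _ (Metric.cthickening_mono hε F))
    (h.volume_hull_inter_ne_top _)

lemma volume_frontier_generatingTile [Finite ι] : volume (frontier (generatingTile φ C)) = 0 :=
  measure_mono_null h.frontier_generatingTile_subset
    (measure_iUnion_null h.volume_frontier_image_hull)

lemma volume_real_generatingTile_pos [Finite ι] : 0 < volume.real (generatingTile φ C) :=
  ENNReal.toReal_pos (h.isOpen_generatingTile.measure_pos _ h.nonempty_generatingTile).ne'
    (measure_ne_top_of_subset sdiff_subset h.isCompact_hull.measure_ne_top)

lemma volume_real_image (j : ι) (s : Set E) :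
    volume.real (φ j '' s) = r j ^ Module.finrank ℝ E * volume.real s := by
  rw [measureReal_def, h.volume_image, ENNReal.toReal_mul,
    ENNReal.toReal_ofReal (pow_nonneg (h.ratio_pos j).le _), measureReal_def]

lemma volume_real_hull_inter_cthickening_le (ε : ℝ) :
    volume.real (C ∩ Metric.cthickening ε F) ≤ volume.real (Metric.cthickening ε F) :=
  measureReal_mono inter_subset_right h.isCompact.isBounded.cthickening.measure_lt_top.ne

lemma volume_real_cthickening_le_add (ε : ℝ) : volume.real (Metric.cthickening ε F) ≤
    volume.real (C ∩ Metric.cthickening ε F) + volume.real (Metric.cthickening ε C \ C) := by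
  have hcover : Metric.cthickening ε F ⊆
      C ∩ Metric.cthickening ε F ∪ Metric.cthickening ε C \ C := fun x hx => by
    by_cases hxC : x ∈ C
    · exact .inl ⟨hxC, hx⟩
    · exact .inr ⟨Metric.cthickening_subset_of_subset ε h.subset_hull hx, hxC⟩
  have hfin := measure_union_ne_top (h.volume_hull_inter_ne_top (Metric.cthickening ε F))
    (measure_ne_top_of_subset sdiff_subset h.isBounded_hull.cthickening.measure_lt_top.ne :
      volume (Metric.cthickening ε C \ C) ≠ ⊤)
  exact (measureReal_mono hcover hfin).trans (measureReal_union_le _ _)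

lemma tendsto_volume_real_cthickening_mul_rpow {x L : ℝ} (hx : -1 < x)
    (hlim : Tendsto (fun ε => volume.real (C ∩ Metric.cthickening ε F) * ε ^ x) (𝓝[>] 0) (𝓝 L)) :
    Tendsto (fun ε => volume.real (Metric.cthickening ε F) * ε ^ x) (𝓝[>] 0) (𝓝 L) := by
  have herr := tendsto_addHaar_real_cthickening_diff_mul_rpow volume h.isCompact_hull h.convex_hull
    h.nonempty_interior_hull hx
  refine tendsto_of_tendsto_of_tendsto_of_le_of_le' hlim (add_zero L ▸ hlim.add herr) ?_ ?_ <;>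
    filter_upwards [self_mem_nhdsWithin] with ε (hε : 0 < ε)
  · exact mul_le_mul_of_nonneg_right (h.volume_real_hull_inter_cthickening_le ε)
      (Real.rpow_nonneg hε.le _)
  · rw [← add_mul]
    exact mul_le_mul_of_nonneg_right (h.volume_real_cthickening_le_add ε)
      (Real.rpow_nonneg hε.le _)

variable [Fintype ι]

lemma volume_hull_inter {N : Set E} (hN : MeasurableSet N) :
    volume (C ∩ N) = volume (generatingTile φ C ∩ N) + ∑ j, volume (φ j '' C ∩ N) := by
  have hcover : C ∩ N = (generatingTile φ C ∩ N) ∪ ⋃ j, (φ j '' C ∩ N) := by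
    rw [← iUnion_inter, ← union_inter_distrib_right, generatingTile,
      sdiff_union_of_subset (iUnion_subset h.image_hull_subset)]
  have hmeas : ∀ j, MeasurableSet (φ j '' C ∩ N) := fun j =>
    (h.isClosed_image_hull j).measurableSet.inter hN
  have hdisj : Disjoint (generatingTile φ C ∩ N) (⋃ j, (φ j '' C ∩ N)) := by
    rw [← iUnion_inter]
    exact disjoint_sdiff_left.mono inter_subset_left inter_subset_left
  rw [hcover, measure_union hdisj (.iUnion hmeas),
    measure_iUnion₀ (h.aedisjoint_image_hull.mono fun j k hjk =>
      hjk.mono inter_subset_left inter_subset_left) fun j => (hmeas j).nullMeasurableSet,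
    tsum_fintype]

lemma volume_real_hull_inter {N : Set E} (hN : MeasurableSet N) :
    volume.real (C ∩ N) =
      volume.real (generatingTile φ C ∩ N) + ∑ j, volume.real (φ j '' C ∩ N) := by
  have hsub : ∀ {s : Set E}, s ⊆ C → volume (s ∩ N) ≠ ⊤ := fun hs =>
    measure_ne_top_of_subset (inter_subset_inter_left N hs) (h.volume_hull_inter_ne_top N)
  have hfin : ∀ j, volume (φ j '' C ∩ N) ≠ ⊤ := fun j => hsub (h.image_hull_subset j)
  simp only [Measure.real]
  rw [h.volume_hull_inter hN, ENNReal.toReal_add (hsub (s := generatingTile φ C) sdiff_subset)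
    (ENNReal.sum_ne_top.2 fun j _ => hfin j), ENNReal.toReal_sum fun j _ => hfin j]

lemma volume_real_hull_inter_cthickening (ε : ℝ) :
    volume.real (C ∩ Metric.cthickening ε F) =
      volume.real (generatingTile φ C ∩ Metric.cthickening ε F) +
        ∑ j, r j ^ Module.finrank ℝ E * volume.real (C ∩ Metric.cthickening (ε / r j) F) := by
  rw [h.volume_real_hull_inter Metric.isClosed_cthickening.measurableSet]
  simp only [h.image_hull_inter_cthickening, h.volume_real_image]

lemma sum_ratio_pow_finrank_lt_one : ∑ j, r j ^ Module.finrank ℝ E < 1 := by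
  have hvol := h.volume_real_hull_inter MeasurableSet.univ
  simp only [inter_univ, h.volume_real_image, ← Finset.sum_mul] at hvol
  refine lt_of_mul_lt_mul_right ?_ (measureReal_nonneg (μ := volume) (s := C))
  linarith [h.volume_real_generatingTile_pos]

lemma lt_finrank {D : ℝ} (hD : ∑ j, r j ^ D = 1) : D < Module.finrank ℝ E := by
  by_contra! hle
  refine h.sum_ratio_pow_finrank_lt_one.not_ge (hD.ge.trans (Finset.sum_le_sum fun j _ => ?_))
  rw [← Real.rpow_natCast]
  exact Real.rpow_le_rpow_of_exponent_ge (h.ratio_pos j) (h.ratio_lt_one j).le hle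

theorem tendsto_volume_real_cthickening_mul_rpow_of_integrableOn {D : ℝ}
    (hD : ∑ j, r j ^ D = 1) (hDd : (Module.finrank ℝ E : ℝ) - 1 < D)
    (hnonlat : Dense (AddSubgroup.closure (range fun j => Real.log (r j)) : Set ℝ))
    (hint : IntegrableOn (fun ε => ε ^ (D - Module.finrank ℝ E - 1) *
      volume.real (generatingTile φ C ∩ Metric.cthickening ε F)) (Ioi 0))
    (hlim : Tendsto (fun ε => volume.real (generatingTile φ C ∩ Metric.cthickening ε F) *
      ε ^ (D - Module.finrank ℝ E)) (𝓝[>] 0) (𝓝 0)) :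
    Tendsto (fun ε => volume.real (Metric.cthickening ε F) * ε ^ (D - Module.finrank ℝ E)) (𝓝[>] 0)
      (𝓝 ((∫ ε in Ioi 0, ε ^ (D - Module.finrank ℝ E - 1) *
        volume.real (generatingTile φ C ∩ Metric.cthickening ε F)) /
          ∑ j, r j ^ D * Real.log (r j)⁻¹)) := by
  have : Nonempty ι := h.nonempty_index
  refine h.tendsto_volume_real_cthickening_mul_rpow (by linarith) (tendsto_mul_rpow_of_renewal
    h.ratio_pos h.ratio_lt_one hD (h.lt_finrank hD) hnonlat (fun ε => measureReal_nonneg)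
    h.volume_real_hull_inter_cthickening_mono (fun ε => measureReal_mono inter_subset_left
      h.isCompact_hull.measure_ne_top) (fun ε _ => ?_) hint hlim)
  simpa only [Real.rpow_natCast] using h.volume_real_hull_inter_cthickening ε

end Volume

section InnerNbhd

variable [Finite ι] {d : ℕ} {φ : ι → EuclideanSpace ℝ (Fin d) → EuclideanSpace ℝ (Fin d)}
  {F C : Set (EuclideanSpace ℝ (Fin d))} (h : IsPearseWinterIFS φ r F C)
include h

lemma volume_innerNbhd_generatingTile {ε : ℝ} (hε : 0 ≤ ε) :
    volume (innerNbhd (generatingTile φ C) ε) =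
      volume (generatingTile φ C ∩ Metric.cthickening ε F) := by
  have hmem : ∀ x ∈ generatingTile φ C,
      Metric.infDist x (generatingTile φ C)ᶜ ≤ ε ↔ x ∈ Metric.cthickening ε F := fun x hx => by
    rw [Metric.mem_cthickening_iff, Metric.infDist, h.infEDist_compl_generatingTile hx,
      ENNReal.le_ofReal_iff_toReal_le (Metric.infEDist_ne_top h.nonempty) hε]
  refine le_antisymm ?_ (measure_mono fun x hx => ⟨subset_closure hx.1, (hmem x hx.1).2 hx.2⟩)
  have hcover : innerNbhd (generatingTile φ C) ε ⊆
      generatingTile φ C ∩ Metric.cthickening ε F ∪ frontier (generatingTile φ C) := fun x hx => by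
    by_cases hxT : x ∈ generatingTile φ C
    · exact .inl ⟨hxT, (hmem x hxT).1 hx.2⟩
    · exact .inr ⟨hx.1, fun hxint => hxT (interior_subset hxint)⟩
  refine (measure_mono hcover).trans ((measure_union_le _ _).trans_eq ?_)
  rw [h.volume_frontier_generatingTile, add_zero]

lemma isDiphaseSteiner_generatingTile_inter_cthickening {g : ℝ} {κ : ℕ → ℝ} (hg : 0 < g)
    (hV : IsDiphaseSteiner d g κ fun ε => volume.real (innerNbhd (generatingTile φ C) ε)) :
    IsDiphaseSteiner d g κ fun ε => volume.real (generatingTile φ C ∩ Metric.cthickening ε F) := by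
  have heq : ∀ {ε : ℝ}, 0 < ε → volume.real (generatingTile φ C ∩ Metric.cthickening ε F) =
      volume.real (innerNbhd (generatingTile φ C) ε) := fun hε => by
    simp only [Measure.real, h.volume_innerNbhd_generatingTile hε.le]
  exact ⟨fun hε hεg => (heq hε).trans (hV.eq_sum hε hεg),
    fun hgε => (heq (hg.trans_le hgε)).trans (hV.eq_neg hgε)⟩

end InnerNbhd

end IsPearseWinterIFS

theorem stmt_0_general {ι : Type*} [Fintype ι] {d : ℕ}
    {φ : ι → EuclideanSpace ℝ (Fin d) → EuclideanSpace ℝ (Fin d)} {r : ι → ℝ}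
    {F C : Set (EuclideanSpace ℝ (Fin d))} (h : IsPearseWinterIFS φ r F C) {D : ℝ}
    (hD : ∑ j, r j ^ D = 1) (hDd : (d : ℝ) - 1 < D) {g : ℝ} (hg : 0 < g) {κ : ℕ → ℝ}
    (hV : IsDiphaseSteiner d g κ fun ε => volume.real (innerNbhd (generatingTile φ C) ε))
    (hnonlat : Dense (AddSubgroup.closure (range fun j => Real.log (r j)) : Set ℝ)) :
    0 < (∑ m ∈ Finset.range (d + 1), g ^ (D - m) / (D - m) * κ m) /
        (∑ j, r j ^ D * Real.log (r j)⁻¹) ∧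
    Tendsto (fun ε => volume.real (Metric.cthickening ε F) * ε ^ (D - d)) (𝓝[>] 0)
      (𝓝 ((∑ m ∈ Finset.range (d + 1), g ^ (D - m) / (D - m) * κ m) /
        (∑ j, r j ^ D * Real.log (r j)⁻¹))) := by
  have hW := h.isDiphaseSteiner_generatingTile_inter_cthickening hg hV
  have hdim : Module.finrank ℝ (EuclideanSpace ℝ (Fin d)) = d := finrank_euclideanSpace_fin
  have hD_lt : D < d := hdim ▸ h.lt_finrank hD
  have hκ : κ d < 0 := by
    have hvol := hW.eq_neg (le_max_left g (Metric.diam C))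
    rw [inter_eq_left.2 (h.generatingTile_subset_cthickening (le_max_right _ _))] at hvol
    linarith [h.volume_real_generatingTile_pos]
  have : Nonempty ι := h.nonempty_index
  rw [← hW.setIntegral_Ioi hDd hD_lt hg]
  refine ⟨div_pos (hW.setIntegral_Ioi_pos hDd hD_lt hg (fun _ => measureReal_nonneg) hκ)
    (sum_rpow_mul_log_inv_pos h.ratio_pos h.ratio_lt_one), ?_⟩
  simpa only [hdim] using h.tendsto_volume_real_cthickening_mul_rpow_of_integrableOn hD
    (by rwa [hdim]) hnonlat (by simpa only [hdim] using hW.integrableOn_Ioi hDd hD_lt hg)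
    (by simpa only [hdim] using hW.tendsto_mul_rpow hDd hg)

end

/-- A non-lattice self-similar fractal `F ⊆ ℝᵈ` (satisfying the
tileset, nontriviality and Pearse–Winter conditions, with `D > d - 1` and a single
diphase Steiner-like generator `G`) is Minkowski measurable, with Minkowski content
`(∑_{m=0}^d (g^{D-m}/(D-m)) κₘ(G)) / (∑_{j=1}^J rⱼ^D log rⱼ⁻¹)`. -/
theorem stmt_0
    (d J : ℕ) (hd : 1 ≤ d) (hJ : 2 ≤ J)
    -- the IFS: similitudes with ratios 0 < rⱼ < 1
    (φ : Fin J → EuclideanSpace ℝ (Fin d) → EuclideanSpace ℝ (Fin d))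
    (r : Fin J → ℝ) (hr0 : ∀ j, 0 < r j) (hr1 : ∀ j, r j < 1)
    (hsim : ∀ j x y, dist (φ j x) (φ j y) = r j * dist x y)
    -- the attractor F
    (F : Set (EuclideanSpace ℝ (Fin d)))
    (hFcpt : IsCompact F) (hFne : F.Nonempty)
    (hFinv : F = ⋃ j, φ j '' F)
    -- the Minkowski dimension D (Moran equation)
    (D : ℝ) (hD : ∑ j, r j ^ D = 1)
    -- the convex hull C = [F], with dim C = d
    (C : Set (EuclideanSpace ℝ (Fin d))) (hC : C = convexHull ℝ F)
    (hdim : (interior C).Nonempty)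
    -- Tileset Condition: OSC with int C as feasible open set
    (hTSC₁ : ∀ j, φ j '' interior C ⊆ interior C)
    (hTSC₂ : ∀ j k, j ≠ k → Disjoint (φ j '' interior C) (φ k '' interior C))
    -- Nontriviality Condition
    (hNTC : ¬ interior C ⊆ ⋃ j, φ j '' C)
    -- Pearse–Winter Condition
    (hPWC : frontier C ⊆ F)
    -- D > d - 1
    (hDd : (d : ℝ) - 1 < D)
    -- T₀ = C \ Φ(C) has a single connected component G, a bounded open set
    (G : Set (EuclideanSpace ℝ (Fin d)))
    (hG : G = C \ ⋃ j, φ j '' C)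
    (hGopen : IsOpen G) (hGbdd : Bornology.IsBounded G) (hGconn : IsConnected G)
    -- G is diphase Steiner-like with inradius g and coefficients κ₀,…,κ_d
    (g : ℝ) (hg : 0 < g)
    (hginr : IsLUB {ρ : ℝ | ∃ x, Metric.ball x ρ ⊆ G} g)
    (κ : ℕ → ℝ)
    (hSt₁ : ∀ ε : ℝ, 0 < ε → ε < g →
      (volume (innerNbhd G ε)).toReal = ∑ m ∈ Finset.range d, κ m * ε ^ ((d : ℝ) - m))
    (hSt₂ : ∀ ε : ℝ, g ≤ ε → (volume (innerNbhd G ε)).toReal = -κ d)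
    (hGvol : (volume G).toReal = -κ d)
    -- non-lattice type: the subgroup ∑ⱼ (log rⱼ)ℤ is dense in ℝ
    (hnonlat : Dense ((AddSubgroup.closure (Set.range fun j => Real.log (r j)) :
        AddSubgroup ℝ) : Set ℝ)) :
    -- F is Minkowski measurable with the stated Minkowski content
    0 < (∑ m ∈ Finset.range (d + 1), g ^ (D - (m : ℝ)) / (D - (m : ℝ)) * κ m) /
        (∑ j, r j ^ D * Real.log (r j)⁻¹) ∧
    Tendsto (fun ε : ℝ => (volume (Metric.cthickening ε F)).toReal * ε ^ (D - (d : ℝ)))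
      (nhdsWithin 0 (Set.Ioi 0))
      (nhds ((∑ m ∈ Finset.range (d + 1), g ^ (D - (m : ℝ)) / (D - (m : ℝ)) * κ m) /
        (∑ j, r j ^ D * Real.log (r j)⁻¹))) := by
  subst hG
  exact stmt_0_general ⟨hr0, hr1, hsim, hFcpt, hFne, hFinv, hC, hTSC₁, hTSC₂, hNTC, hPWC⟩ hD hDd hg
    ⟨hSt₁ _, hSt₂ _⟩ hnonlat
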